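/- arXiv:2406.02971 — 2 statements merged into one kernel-verified Lean document; each statement's English description precedes it below -/
import Mathlib

section
/- Every nonempty word w has a most frequent subword u (that is, a word u with occ(w,u) = maxocc(w)) whose first letter equals the first letter of w and whose last letter equals the last letter of w. -/
/-!
If `w = a v` and `u` does not start with `a`, no occurrence of `u` in `w` uses the first position
of `w`, so adding that position turns it into an occurrence of `a u`; this is injective, whence
`occ w u ≤ occ w (a u)` (`occ_le_occ_cons`). The mirror image for last letters is
`occ_le_occ_concat`. Starting from any most frequent subword, prepend the first letter of `w` if it
is not already there, and then append the last letter of `w` if it is not already there. The result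
is still most frequent, and appending to a nonempty word does not disturb its first letter.
-/

open List Real

/-- `occ w u` is the number of occurrences of `u` as a subword (subsequence) of `w`,
i.e. the multiplicity of `u` among the `2^|w|` sublists of `w`. -/
def occ {α : Type*} [DecidableEq α] (w u : List α) : ℕ := w.sublists.count u

/-- `maxocc w` is the maximal number of occurrences of any subword of `w`. -/
noncomputable def maxocc {α : Type*} [DecidableEq α] (w : List α) : ℕ :=
  sSup {n : ℕ | ∃ u : List α, occ w u = n}

theorem bddAbove_occ {α : Type*} [DecidableEq α] (w : List α) :
    BddAbove {n : ℕ | ∃ u : List α, occ w u = n} := by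
  refine ⟨w.sublists.length, ?_⟩
  rintro n ⟨u, rfl⟩
  exact List.count_le_length

theorem occ_le_maxocc {α : Type*} [DecidableEq α] (w u : List α) : occ w u ≤ maxocc w :=
  le_csSup (bddAbove_occ w) ⟨u, rfl⟩

theorem exists_occ_eq_maxocc {α : Type*} [DecidableEq α] (w : List α) :
    ∃ u : List α, occ w u = maxocc w :=
  Nat.sSup_mem (s := {n : ℕ | ∃ u : List α, occ w u = n}) ⟨_, [], rfl⟩ (bddAbove_occ w)

theorem occ_le_occ_cons {α : Type*} [DecidableEq α] (a : α) (v u : List α)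
    (hu : u.head? ≠ some a) : occ (a :: v) u ≤ occ (a :: v) (a :: u) := by
  unfold occ
  rw [(List.sublists_perm_sublists' _).count_eq, (List.sublists_perm_sublists' _).count_eq,
    List.sublists'_cons, List.count_append, List.count_append,
    List.count_map_of_injective _ _ List.cons_injective u]
  have h : List.count u (List.map (List.cons a) v.sublists') = 0 := by
    rw [List.count_eq_zero]
    intro hm
    obtain ⟨x, -, rfl⟩ := List.mem_map.1 hm
    exact hu rfl
  omega

theorem occ_le_occ_concat {α : Type*} [DecidableEq α] (b : α) (v u : List α)
    (hu : u.getLast? ≠ some b) : occ (v ++ [b]) u ≤ occ (v ++ [b]) (u ++ [b]) := by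
  unfold occ
  rw [List.sublists_concat, List.count_append, List.count_append,
    List.count_map_of_injective _ (fun x => x ++ [b]) (List.append_left_injective [b]) u]
  have h : List.count u (List.map (fun x => x ++ [b]) v.sublists) = 0 := by
    rw [List.count_eq_zero]
    intro hm
    obtain ⟨x, -, rfl⟩ := List.mem_map.1 hm
    exact hu (by simp)
  omega

theorem stmt_1 {α : Type*} [DecidableEq α] (w : List α) (hw : w ≠ []) :
    ∃ u : List α, occ w u = maxocc w ∧ u.head? = w.head? ∧ u.getLast? = w.getLast? := by
  obtain ⟨u₁, h₁, hd₁⟩ : ∃ u : List α, occ w u = maxocc w ∧ u.head? = w.head? := by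
    obtain ⟨u, hu⟩ := exists_occ_eq_maxocc w
    obtain ⟨a, v, rfl⟩ := List.exists_cons_of_ne_nil hw
    by_cases h : u.head? = some a
    · exact ⟨u, hu, h⟩
    · exact ⟨a :: u, le_antisymm (occ_le_maxocc _ _) (hu ▸ occ_le_occ_cons a v u h), rfl⟩
  by_cases h : u₁.getLast? = w.getLast?
  · exact ⟨u₁, h₁, hd₁, h⟩
  · have hne : u₁ ≠ [] := by
      rintro rfl
      exact hw (List.head?_eq_none_iff.1 hd₁.symm)
    obtain ⟨v, b, rfl⟩ := (List.eq_nil_or_concat' w).resolve_left hw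
    rw [List.getLast?_concat] at h
    refine ⟨u₁ ++ [b], le_antisymm (occ_le_maxocc _ _) (h₁ ▸ occ_le_occ_concat b v u₁ h), ?_, ?_⟩
    · rw [List.head?_append_of_ne_nil _ hne, hd₁]
    · simp
end

section
/- For every m ≥ 0 and the binary word w = (0011)^m (the m-fold repetition of 0011), there exists r ≥ 0 such that occ(w, (01)^r) = maxocc(w); that is, some most frequent subword of (0011)^m has the form (01)^r. -/
/-!
Put `b = 1 - a` for the letter other than `a`. The key inequality, for `w = (0011)^m` (and all
its suffixes), is `2 occ(w, x a a z) ≤ occ(w, x a z) + occ(w, x a b a z)`. Indeed, consider an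
occurrence of `x a a z`. If the two displayed letters `a` lie in the same block of `w`, deleting
either of them gives an occurrence of `x a z`; if they lie in different blocks, a full block `bb`
separates them, and either of its letters can be inserted to give an occurrence of `x a b a z`.
(`two_mul_occ_le`; the formal proof inducts on suffixes of `w`.)

So replacing `a a` by the better of `a` and `a b a` never decreases the number of occurrences, and
scanning a word from left to right turns it into an alternating word (`exists_alternating_ge`).
Since `w` starts with `0` and ends with `1`, prepending `0` to a word that starts with `1` and
appending `1` to a word that ends in `0` do not decrease the number of occurrences either, and this
turns the alternating word into some `(01)^r`.
-/

open List Real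

/-- `rep v m` is the concatenation of `m` copies of the word `v`. -/
def rep {α : Type*} (v : List α) (m : ℕ) : List α := (List.replicate m v).flatten

lemma occ_nil_cons {α : Type*} [DecidableEq α] (a : α) (u : List α) : occ [] (a :: u) = 0 := by
  simp [occ]

lemma occ_nil_right {α : Type*} [DecidableEq α] (w : List α) : occ w [] = 1 := by
  unfold occ
  rw [(sublists_perm_sublists' w).count_eq]
  induction w with
  | nil => simp
  | cons c w ih =>
    rw [sublists'_cons, count_append, ih, Nat.add_eq_left, count_eq_zero]
    simp

lemma occ_cons_cons {α : Type*} [DecidableEq α] (c a : α) (w u : List α) :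
    occ (c :: w) (a :: u) = occ w (a :: u) + if c = a then occ w u else 0 := by
  unfold occ
  rw [(sublists_perm_sublists' _).count_eq, (sublists_perm_sublists' w).count_eq,
    (sublists_perm_sublists' w).count_eq, sublists'_cons, count_append]
  congr 1
  split_ifs with h
  · subst h
    exact count_map_of_injective _ _ cons_injective _
  · rw [count_eq_zero]
    simp [h]

lemma occ_le_cons {α : Type*} [DecidableEq α] (c : α) (w u : List α) :
    occ w u ≤ occ (c :: w) u := by
  cases u with
  | nil => simp [occ_nil_right]
  | cons a u => rw [occ_cons_cons]; omega

lemma rep_zero {α : Type*} (v : List α) : rep v 0 = [] := by simp [rep]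

lemma rep_succ {α : Type*} (v : List α) (n : ℕ) : rep v (n + 1) = v ++ rep v n := by
  simp [rep, replicate_succ]

lemma rep_succ' {α : Type*} (v : List α) (n : ℕ) : rep v (n + 1) = rep v n ++ v := by
  simp [rep, replicate_succ']

/-- `DoubleIneq w` is the inequality `2 occ(w, x a a z) ≤ occ(w, x a z) + occ(w, x a b a z)` for all
words `x`, `z` and letters `a`, with `b = 1 - a` the other letter. -/
def DoubleIneq (w : List (Fin 2)) : Prop :=
  ∀ (x : List (Fin 2)) (a : Fin 2) (z : List (Fin 2)),
    2 * occ w (x ++ a :: a :: z) ≤ occ w (x ++ a :: z) + occ w (x ++ a :: (1 - a) :: a :: z)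

/-- For the word `c :: w` only the case of an empty prefix `x` has to be checked. -/
lemma DoubleIneq.cons {w : List (Fin 2)} (c : Fin 2) (hw : DoubleIneq w)
    (h : ∀ (a : Fin 2) (z : List (Fin 2)), 2 * occ (c :: w) (a :: a :: z) ≤
      occ (c :: w) (a :: z) + occ (c :: w) (a :: (1 - a) :: a :: z)) :
    DoubleIneq (c :: w) := by
  intro x a z
  cases x with
  | nil => exact h a z
  | cons e x =>
    have h1 := hw (e :: x) a z
    have h2 := hw x a z
    simp only [cons_append, occ_cons_cons] at h1 ⊢
    split_ifs <;> omega

/-- Prepending a single letter `c` to a word `w` that is empty or begins with a full block of the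
other letter; the hypothesis `h` is what is used of that block. -/
lemma DoubleIneq.cons_one {w : List (Fin 2)} (c : Fin 2) (hw : DoubleIneq w)
    (h : ∀ z, 2 * occ w (c :: z) ≤ occ w ((1 - c) :: c :: z)) : DoubleIneq (c :: w) := by
  refine hw.cons c fun a z => ?_
  have h1 := hw [] a z
  simp only [nil_append] at h1
  simp only [occ_cons_cons c a]
  split_ifs with hc
  · subst hc
    have := h z
    omega
  · omega

/-- Prepending a full block `cc` to such a word. -/
lemma DoubleIneq.cons_two {w : List (Fin 2)} (c : Fin 2) (hw : DoubleIneq w)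
    (h : ∀ z, 2 * occ w (c :: z) ≤ occ w ((1 - c) :: c :: z)) : DoubleIneq (c :: c :: w) := by
  refine (hw.cons_one c h).cons c fun a z => ?_
  have h1 := hw [] a z
  simp only [nil_append] at h1
  by_cases hc : c = a
  · subst hc
    have h2 := h z
    have h3 := occ_le_cons c w z
    have h4 : c ≠ 1 - c := by clear * -; revert c; decide
    simp only [occ_cons_cons, if_true, if_neg h4] at *
    omega
  · simp only [occ_cons_cons c a, if_neg hc]
    omega

lemma two_mul_occ_le_block (a b : Fin 2) (hab : b ≠ a) (w z : List (Fin 2)) :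
    2 * occ (b :: b :: w) (a :: z) ≤ occ (b :: b :: w) (b :: a :: z) := by
  simp only [occ_cons_cons, if_neg hab, if_true]
  omega

lemma two_mul_occ_le (m : ℕ) : DoubleIneq (rep [0, 0, 1, 1] m) := by
  induction m with
  | zero =>
    intro x a z
    rw [rep_zero]
    cases x <;> simp [occ_nil_cons]
  | succ m ih =>
    rw [rep_succ]
    refine DoubleIneq.cons_two 0 (DoubleIneq.cons_two 1 ih fun z => ?_) fun z => ?_
    · cases m with
      | zero => simp [rep_zero, occ_nil_cons]
      | succ m =>
        rw [rep_succ]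
        exact two_mul_occ_le_block 1 0 (by decide) _ z
    · exact two_mul_occ_le_block 0 1 (by decide) _ z

/-- Every word is dominated by an alternating one. The word is split as `l.reverse ++ z`, where the
part `l.reverse` already scanned is alternating. -/
lemma exists_alternating_ge {w : List (Fin 2)} (hw : DoubleIneq w) (z : List (Fin 2)) :
    ∀ l : List (Fin 2), l.IsChain (· ≠ ·) →
      ∃ v : List (Fin 2), v.IsChain (· ≠ ·) ∧ occ w (l.reverse ++ z) ≤ occ w v := by
  induction z with
  | nil =>
    intro l hl
    refine ⟨l.reverse, ?_, by simp⟩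
    rw [isChain_reverse]
    exact hl.imp fun _ _ h => h.symm
  | cons c z ih =>
    intro l hl
    rcases l with _ | ⟨d, l⟩
    · simpa using ih [c] (by simp)
    · by_cases hc : c = d
      · subst hc
        have hb : c ≠ 1 - c := by clear * -; revert c; decide
        obtain ⟨v₁, hv₁, h₁⟩ := ih (c :: l) hl
        obtain ⟨v₂, hv₂, h₂⟩ := ih (c :: (1 - c) :: c :: l)
          (isChain_cons_cons.2 ⟨hb, isChain_cons_cons.2 ⟨hb.symm, hl⟩⟩)
        have h := hw l.reverse c z
        simp only [reverse_cons, append_assoc, cons_append, nil_append] at h₁ h₂ ⊢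
        rcases le_total (occ w v₁) (occ w v₂) with h' | h'
        · exact ⟨v₂, hv₂, by omega⟩
        · exact ⟨v₁, hv₁, by omega⟩
      · simpa using ih (c :: d :: l) (isChain_cons_cons.2 ⟨hc, hl⟩)

lemma eq_rep_of_alternating : ∀ v : List (Fin 2), v.IsChain (· ≠ ·) → v.head? ≠ some 1 →
    ∃ r, v = rep [0, 1] r ∨ v = rep [0, 1] r ++ [0]
  | [], _, _ => ⟨0, by simp [rep_zero]⟩
  | [a], _, h => ⟨0, by
      have : a = 0 := by simp at h; omega
      simp [rep_zero, this]⟩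
  | a :: b :: v, hv, h => by
      have ha : a = 0 := by simp at h; omega
      have hb : b = 1 := by have := (isChain_cons_cons.1 hv).1; omega
      subst ha hb
      have hv' := (isChain_cons_cons.1 hv).2
      obtain ⟨r, hr⟩ := eq_rep_of_alternating v hv'.tail (by
        cases v with
        | nil => simp
        | cons c v =>
          have := (isChain_cons_cons.1 hv').1
          simpa using this.symm)
      refine ⟨r + 1, ?_⟩
      rw [rep_succ]
      simpa using hr

lemma occ_append_zero_le (w u : List (Fin 2)) :
    occ (w ++ [1]) (u ++ [0]) ≤ occ (w ++ [1]) (u ++ [0, 1]) := by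
  induction w generalizing u with
  | nil => rcases u with _ | ⟨e, _ | ⟨f, u⟩⟩ <;> simp [occ_cons_cons, occ_nil_cons]
  | cons c w ih =>
    cases u with
    | nil =>
      have h1 := ih []
      have h2 : 1 ≤ occ (w ++ [1]) [(1 : Fin 2)] := by
        clear ih h1
        induction w with
        | nil => simp [occ_cons_cons, occ_nil_right]
        | cons d w ih => exact ih.trans (occ_le_cons d _ _)
      simp only [nil_append, cons_append, occ_cons_cons, occ_nil_right] at h1 ⊢
      split_ifs <;> omega
    | cons e u =>
      have h1 := ih (e :: u)
      have h2 := ih u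
      simp only [cons_append, occ_cons_cons] at h1 ⊢
      split_ifs <;> omega

lemma exists_rep_ge (m : ℕ) (u : List (Fin 2)) :
    ∃ r, occ (rep ([0, 0, 1, 1] : List (Fin 2)) m) u ≤
      occ (rep ([0, 0, 1, 1] : List (Fin 2)) m) (rep [0, 1] r) := by
  rcases m with _ | m
  · refine ⟨0, ?_⟩
    rw [rep_zero, rep_zero]
    cases u <;> simp [occ_nil_cons]
  have hw := two_mul_occ_le (m + 1)
  obtain ⟨v, hv, huv⟩ := exists_alternating_ge hw u [] (by simp)
  -- The alternating word may be taken to start with `0`.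
  obtain ⟨v', hv', h0, hvv⟩ : ∃ v' : List (Fin 2), v'.IsChain (· ≠ ·) ∧ v'.head? ≠ some 1 ∧
      occ (rep ([0, 0, 1, 1] : List (Fin 2)) (m + 1)) v ≤
        occ (rep ([0, 0, 1, 1] : List (Fin 2)) (m + 1)) v' := by
    by_cases h : v.head? = some 1
    · obtain ⟨t, rfl⟩ : ∃ t, v = 1 :: t := by
        cases v with
        | nil => simp at h
        | cons a t => exact ⟨t, by simp at h; rw [h]⟩
      refine ⟨0 :: 1 :: t, isChain_cons_cons.2 ⟨by decide, hv⟩, by simp, ?_⟩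
      rw [rep_succ]
      simp only [cons_append, occ_cons_cons (0 : Fin 2), if_true,
        if_neg (show (0 : Fin 2) ≠ 1 by decide)]
      omega
    · exact ⟨v, hv, h, le_rfl⟩
  obtain ⟨r, rfl | rfl⟩ := eq_rep_of_alternating v' hv' h0
  · exact ⟨r, huv.trans hvv⟩
  · refine ⟨r + 1, (huv.trans hvv).trans ?_⟩
    have h := occ_append_zero_le (rep [0, 0, 1, 1] m ++ [0, 0, 1]) (rep [0, 1] r)
    rw [rep_succ' _ r, rep_succ' _ m]
    simpa using h

theorem stmt_8 (m : ℕ) :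
    ∃ r : ℕ, occ (rep ([0, 0, 1, 1] : List (Fin 2)) m) (rep [0, 1] r) =
      maxocc (rep ([0, 0, 1, 1] : List (Fin 2)) m) := by
  set w := rep ([0, 0, 1, 1] : List (Fin 2)) m with hw
  -- Boundedness and non-emptiness make the supremum in `maxocc` a genuine maximum.
  have hbdd : BddAbove {n : ℕ | ∃ u : List (Fin 2), occ w u = n} := by
    refine ⟨w.sublists.length, ?_⟩
    rintro _ ⟨u, rfl⟩
    exact count_le_length
  obtain ⟨u, hu⟩ : maxocc w ∈ {n : ℕ | ∃ u : List (Fin 2), occ w u = n} :=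
    Nat.sSup_mem ⟨_, [], rfl⟩ hbdd
  obtain ⟨r, hr⟩ := exists_rep_ge m u
  exact ⟨r, le_antisymm (le_csSup hbdd ⟨_, rfl⟩) (hu ▸ hr)⟩
end
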